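/- Let β > 0 and let C be a circular component of G with loop ν. Then C is A(β)-harmonic (i.e. ρ(A(β)^C) = 1 and, in case C̄∖C ≠ ∅, ρ(A(β)^{C̄∖C}) < 1) if and only if the following three conditions hold: F(ν) = 0; F(μ) > 0 for every loop μ in C̄∖C; and for every component C' of G contained in C̄∖C there exists β' < β with ρ(A(β')^{C'}) = 1. -/

import Mathlib

open Filter Finset

/-- The spectral radius of a real matrix, `ρ(M) = lim_n ‖Mⁿ‖^{1/n}`
(computed with the entrywise ℓ¹-norm, and as a `limsup` so that it is always defined;
it is `0` for the matrix over the empty index type). -/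
noncomputable def specRad {n : Type*} [Fintype n] [DecidableEq n] (M : Matrix n n ℝ) : ℝ :=
  Filter.limsup (fun k : ℕ => (∑ i, ∑ j, |(M ^ k) i j|) ^ ((1 : ℝ) / (k : ℝ))) Filter.atTop

/-- The spectral radius `ρ(B^S)` of the submatrix of `B` obtained by restricting to `S × S`. -/
noncomputable def specRadOn {V : Type*} [Fintype V] (B : Matrix V V ℝ) (S : Set V) : ℝ :=
  letI : Fintype S := (Set.toFinite S).fintype
  letI : DecidableEq S := Classical.decEq _
  specRad (fun i j : S => B i.1 j.1)

variable {V E : Type*}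

/-- Consecutive edges of the list match up: `r(eᵢ) = s(eᵢ₊₁)`. -/
def ChainOK (src rng : E → V) (μ : List E) : Prop :=
  List.Chain' (fun e f => rng e = src f) μ

/-- A loop: a nonempty path `μ = e₁⋯eₙ` with `s(e₁) = r(eₙ)`. -/
def IsLoop (src rng : E → V) (μ : List E) : Prop :=
  ∃ h : μ ≠ [], ChainOK src rng μ ∧ src (μ.head h) = rng (μ.getLast h)

/-- A loop lying in the vertex set `C`. -/
def LoopIn (src rng : E → V) (C : Set V) (μ : List E) : Prop :=
  IsLoop src rng μ ∧ ∀ e ∈ μ, src e ∈ C ∧ rng e ∈ C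

/-- `v ⤳ w`: there is a (possibly length-0) path from `v` to `w`. -/
def GReaches (src rng : E → V) (v w : V) : Prop :=
  v = w ∨ ∃ μ : List E, ∃ h : μ ≠ [],
    ChainOK src rng μ ∧ src (μ.head h) = v ∧ rng (μ.getLast h) = w

/-- The closure of a set of vertices: all vertices that reach it. -/
def GClosure (src rng : E → V) (C : Set V) : Set V :=
  {v | ∃ w ∈ C, GReaches src rng v w}

/-- A component: an equivalence class of `v ∼ w` (mutual reachability) containing a loop. -/
def GIsComponent (src rng : E → V) (C : Set V) : Prop :=
  (∃ v, C = {w | GReaches src rng v w ∧ GReaches src rng w v}) ∧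
  ∃ μ : List E, LoopIn src rng C μ

/-- The property that the loop `μ` witnesses circularity of the component `C`: `μ` is a simple
loop visiting every vertex of `C`, and containing every edge of the graph joining vertices
of `C`. -/
def CircularWitness (src rng : E → V) (C : Set V) (μ : List E) : Prop :=
  LoopIn src rng C μ ∧ (μ.map src).Nodup ∧
  (∀ v ∈ C, v ∈ μ.map src) ∧
  (∀ e : E, src e ∈ C → rng e ∈ C → e ∈ μ)

/-- A circular component: a component containing, up to the choice of starting vertex,
exactly one loop. -/
def IsCircular (src rng : E → V) (C : Set V) : Prop :=
  GIsComponent src rng C ∧ ∃ μ : List E, CircularWitness src rng C μ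

/-- The matrix `A(β)` with entries `A(β)_{vw} = Σ_{e : v → w} e^{-β F(e)}`. -/
noncomputable def Amat [Fintype E] [DecidableEq V] (src rng : E → V) (F : E → ℝ) (β : ℝ) :
    Matrix V V ℝ :=
  fun v w => ∑ e ∈ Finset.univ.filter (fun e => src e = v ∧ rng e = w), Real.exp (-β * F e)

/-- `F` extended to paths: `F(e₁⋯eₙ) = F(e₁) + ⋯ + F(eₙ)`. -/
def Fpath (F : E → ℝ) (μ : List E) : ℝ := (μ.map F).sum

/-!
A nonnegative matrix `B` has `ρ(B) < r` only if `B x ≤ r x` for some positive vector `x`, and such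
an `x` forces `ρ(B) ≤ r`. Multiplying `A(β)` by a positive vector along a loop `μ` in `S` therefore
gives `exp (-β F(μ)) ≤ ρ(A(β)^S) ^ |μ|`, so `ρ(A(β)^S) < 1` makes all loops in `S` positive.
Conversely, if all loops in `S` are positive, lightest paths define a potential that bounds every
`F(e)` below by `δ > 0` up to a coboundary; rescaling subinvariant vectors by the potential shows
`ρ(A(β)^S) ≤ exp (-(β - β') δ) ρ(A(β')^S)` for `β' ≤ β`, so the spectral radius drops below `1`
beyond any `β'` where it equals `1`. Such a `β'` exists for each component as soon as
`ρ(A(β)^S) < 1`, by the intermediate value theorem between `0` and `β`, since a loop forces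
`1 ≤ ρ(A(0)^S)`. The components control all of `S` because `A(β)` is block triangular with respect
to reachability. On a circular component the coboundary makes `F` constant along the loop `ν`,
whence `ρ(A(β)^C) ^ |ν| = exp (-β F(ν))`.
-/

section MulVec

open scoped Matrix

variable {m n R : Type*} [Fintype n] [CommSemiring R] [PartialOrder R] [IsOrderedRing R]
  {M : Matrix m n R} {x y : n → R}

lemma mulVec_le_mulVec_of_nonneg (hM : ∀ i j, 0 ≤ M i j) (h : x ≤ y) :
    M *ᵥ x ≤ M *ᵥ y :=
  fun i => dotProduct_le_dotProduct_of_nonneg_left h (hM i)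

lemma mul_le_mulVec_apply (hM : ∀ i j, 0 ≤ M i j) (hx : 0 ≤ x) (i : m) (j : n) :
    M i j * x j ≤ (M *ᵥ x) i :=
  single_le_sum (f := fun j => M i j * x j) (fun j _ => mul_nonneg (hM i j) (hx j)) (mem_univ j)

lemma pow_mulVec_le [DecidableEq n] {M : Matrix n n R} {r : R} (hM : ∀ i j, 0 ≤ M i j)
    (hr : 0 ≤ r) (h : M *ᵥ x ≤ r • x) (k : ℕ) : M ^ k *ᵥ x ≤ r ^ k • x := by
  induction k with
  | zero => simp
  | succ k ih =>
    calc M ^ (k + 1) *ᵥ x = M ^ k *ᵥ (M *ᵥ x) := by rw [pow_succ, Matrix.mulVec_mulVec]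
      _ ≤ M ^ k *ᵥ (r • x) := mulVec_le_mulVec_of_nonneg (Matrix.pow_apply_nonneg hM k) h
      _ = r • (M ^ k *ᵥ x) := Matrix.mulVec_smul ..
      _ ≤ r • (r ^ k • x) := smul_le_smul_of_nonneg_left ih hr
      _ = r ^ (k + 1) • x := by rw [smul_smul, pow_succ']

end MulVec

section EntrywiseL1Norm

open scoped Matrix

variable {n : Type*} [Fintype n] {M : Matrix n n ℝ} {x : n → ℝ} {r : ℝ}

/-- The entrywise `ℓ¹`-norm of a real matrix, in terms of which `specRad` is defined. -/
def entrywiseL1Norm (M : Matrix n n ℝ) : ℝ := ∑ i, ∑ j, |M i j|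

lemma entrywiseL1Norm_nonneg (M : Matrix n n ℝ) : 0 ≤ entrywiseL1Norm M :=
  sum_nonneg fun _ _ => sum_nonneg fun _ _ => abs_nonneg _

lemma sum_row_le_entrywiseL1Norm (M : Matrix n n ℝ) (i : n) :
    ∑ j, M i j ≤ entrywiseL1Norm M :=
  calc ∑ j, M i j ≤ ∑ j, |M i j| := sum_le_sum fun _ _ => le_abs_self _
    _ ≤ entrywiseL1Norm M := single_le_sum (f := fun i => ∑ j, |M i j|)
        (fun _ _ => sum_nonneg fun _ _ => abs_nonneg _) (mem_univ i)

variable [DecidableEq n]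

lemma exists_entrywiseL1Norm_pow_le (hM : ∀ i j, 0 ≤ M i j) (hx : ∀ i, 0 < x i) (hr : 0 ≤ r)
    (h : M *ᵥ x ≤ r • x) : ∃ K > 0, ∀ k, entrywiseL1Norm (M ^ k) ≤ K * r ^ k := by
  have entry_le (k : ℕ) (i j : n) : |(M ^ k) i j| ≤ x i / x j * r ^ k := by
    have hMk := Matrix.pow_apply_nonneg hM k
    rw [abs_of_nonneg (hMk i j), div_mul_eq_mul_div, le_div_iff₀ (hx j), mul_comm (x i)]
    exact (mul_le_mulVec_apply hMk (fun l => (hx l).le) i j).trans (pow_mulVec_le hM hr h k i)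
  have ratios_nonneg : 0 ≤ ∑ i, ∑ j, x i / x j :=
    sum_nonneg fun i _ => sum_nonneg fun j _ => (div_pos (hx i) (hx j)).le
  refine ⟨∑ i, ∑ j, x i / x j + 1, by linarith, fun k => ?_⟩
  calc entrywiseL1Norm (M ^ k) ≤ ∑ i, ∑ j, x i / x j * r ^ k :=
        sum_le_sum fun i _ => sum_le_sum fun j _ => entry_le k i j
    _ = (∑ i, ∑ j, x i / x j) * r ^ k := by simp_rw [sum_mul]
    _ ≤ (∑ i, ∑ j, x i / x j + 1) * r ^ k := by gcongr; linarith

end EntrywiseL1Norm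

section SpecRad

open scoped Matrix

variable {n : Type*} [Fintype n] [DecidableEq n] {M : Matrix n n ℝ} {x : n → ℝ} {r : ℝ}

lemma tendsto_const_mul_pow_rpow_one_div {K : ℝ} (hK : 0 < K) (hr : 0 ≤ r) :
    Tendsto (fun k : ℕ => (K * r ^ k) ^ ((1 : ℝ) / k)) atTop (nhds r) := by
  have tendsto_root : Tendsto (fun k : ℕ => K ^ ((1 : ℝ) / k)) atTop (nhds 1) := by
    simpa [Function.comp_def] using ((Real.continuous_const_rpow hK.ne').tendsto 0).comp
      tendsto_one_div_atTop_nhds_zero_nat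
  have tendsto_mul : Tendsto (fun k : ℕ => K ^ ((1 : ℝ) / k) * r) atTop (nhds r) := by
    simpa using tendsto_root.mul_const r
  refine tendsto_mul.congr' ?_
  filter_upwards [eventually_ne_atTop 0] with k hk
  rw [Real.mul_rpow hK.le (pow_nonneg hr k), one_div, Real.pow_rpow_inv_natCast hr hk]

lemma exists_tendsto_and_entrywiseL1Norm_root_le (hM : ∀ i j, 0 ≤ M i j) (hx : ∀ i, 0 < x i)
    (hr : 0 ≤ r) (h : M *ᵥ x ≤ r • x) :
    ∃ u : ℕ → ℝ, Tendsto u atTop (nhds r) ∧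
      ∀ k : ℕ, entrywiseL1Norm (M ^ k) ^ ((1 : ℝ) / k) ≤ u k := by
  obtain ⟨K, hK, norm_pow_le⟩ := exists_entrywiseL1Norm_pow_le hM hx hr h
  exact ⟨_, tendsto_const_mul_pow_rpow_one_div hK hr, fun k =>
    Real.rpow_le_rpow (entrywiseL1Norm_nonneg _) (norm_pow_le k) (by positivity)⟩

lemma specRad_le_of_mulVec_le (hM : ∀ i j, 0 ≤ M i j) (hx : ∀ i, 0 < x i) (hr : 0 ≤ r)
    (h : M *ᵥ x ≤ r • x) : specRad M ≤ r := by
  obtain ⟨u, tendsto_u, root_le⟩ := exists_tendsto_and_entrywiseL1Norm_root_le hM hx hr h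
  have root_nonneg (k : ℕ) : 0 ≤ entrywiseL1Norm (M ^ k) ^ ((1 : ℝ) / k) :=
    Real.rpow_nonneg (entrywiseL1Norm_nonneg _) _
  rw [← tendsto_u.limsup_eq]
  exact limsup_le_limsup (Eventually.of_forall root_le)
    (isBoundedUnder_of ⟨0, root_nonneg⟩).isCoboundedUnder_le tendsto_u.isBoundedUnder_le

lemma exists_entrywiseL1Norm_root_lt (hM : ∀ i j, 0 ≤ M i j) (h : specRad M < r) :
    ∃ N : ℕ, N ≠ 0 ∧ entrywiseL1Norm (M ^ N) ^ ((1 : ℝ) / N) < r := by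
  have one_subinvariant : M *ᵥ 1 ≤ entrywiseL1Norm M • (1 : n → ℝ) := fun i => by
    simpa [Matrix.mulVec, dotProduct] using sum_row_le_entrywiseL1Norm M i
  obtain ⟨u, tendsto_u, root_le⟩ := exists_tendsto_and_entrywiseL1Norm_root_le hM
    (fun _ => one_pos) (entrywiseL1Norm_nonneg M) one_subinvariant
  have root_bounded := tendsto_u.isBoundedUnder_le.mono_le (Eventually.of_forall root_le)
  exact ((eventually_ne_atTop 0).and (eventually_lt_of_limsup_lt h root_bounded)).exists

lemma specRad_nonneg (hM : ∀ i j, 0 ≤ M i j) : 0 ≤ specRad M :=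
  le_of_forall_gt fun _ h =>
    let ⟨_, _, root_lt⟩ := exists_entrywiseL1Norm_root_lt hM h
    (Real.rpow_nonneg (entrywiseL1Norm_nonneg _) _).trans_lt root_lt

lemma exists_pos_mulVec_le_of_pow_mulVec_one_le (hM : ∀ i j, 0 ≤ M i j) {N : ℕ} (hN : N ≠ 0)
    (h : M ^ N *ᵥ 1 ≤ 1) : ∃ x : n → ℝ, (∀ i, 0 < x i) ∧ M *ᵥ x ≤ x := by
  refine ⟨(∑ k ∈ range N, M ^ k) *ᵥ 1, fun i => ?_, ?_⟩
  · have pow_mulVec_one_nonneg (k : ℕ) : 0 ≤ (M ^ k *ᵥ 1) i :=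
      sum_nonneg fun j _ => mul_nonneg (Matrix.pow_apply_nonneg hM k i j) zero_le_one
    rw [Matrix.sum_mulVec, Finset.sum_apply]
    exact sum_pos' (fun k _ => pow_mulVec_one_nonneg k)
      ⟨0, mem_range.2 (Nat.pos_of_ne_zero hN), by simp⟩
  · have telescope := congrArg (· *ᵥ (1 : n → ℝ)) (mul_geom_sum M N)
    simp only [← Matrix.mulVec_mulVec, Matrix.sub_mulVec, Matrix.one_mulVec] at telescope
    exact sub_nonpos.1 (telescope.trans_le (sub_nonpos.2 h))

lemma exists_pos_mulVec_le_of_specRad_lt (hM : ∀ i j, 0 ≤ M i j) (h : specRad M < r) :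
    ∃ x : n → ℝ, (∀ i, 0 < x i) ∧ M *ᵥ x ≤ r • x := by
  have hr : 0 < r := (specRad_nonneg hM).trans_lt h
  obtain ⟨N, hN, root_lt⟩ := exists_entrywiseL1Norm_root_lt hM h
  have norm_le : entrywiseL1Norm (M ^ N) ≤ r ^ N := by
    rw [one_div] at root_lt
    exact (Real.rpow_inv_le_iff_of_pos (entrywiseL1Norm_nonneg _) hr.le
      (by positivity)).1 root_lt.le |>.trans_eq (Real.rpow_natCast r N)
  have scaled_pow_le : (r⁻¹ • M) ^ N *ᵥ 1 ≤ (1 : n → ℝ) := fun i => by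
    have row_le := (sum_row_le_entrywiseL1Norm (M ^ N) i).trans norm_le
    rw [smul_pow, Matrix.smul_mulVec, Pi.smul_apply, smul_eq_mul, inv_pow,
      inv_mul_le_iff₀ (by positivity)]
    simpa [Matrix.mulVec, dotProduct] using row_le
  obtain ⟨x, hx, scaled_le⟩ := exists_pos_mulVec_le_of_pow_mulVec_one_le (M := r⁻¹ • M)
    (fun i j => mul_nonneg (inv_nonneg.2 hr.le) (hM i j)) hN scaled_pow_le
  rw [Matrix.smul_mulVec, inv_smul_le_iff_of_pos hr] at scaled_le
  exact ⟨x, hx, scaled_le⟩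

end SpecRad

section SpecRadOn

open scoped Matrix

/-- A subinvariant vector, with factor `r`, of the submatrix of `B` on `S × S`: it is positive on
`S` and satisfies `B^S x ≤ r x`. It is extended by zero to all of `V`, so that `B^S x` is the
restriction to `S` of `B *ᵥ x`. -/
structure IsSubinvariantOn [Fintype V] (B : Matrix V V ℝ) (S : Set V) (r : ℝ) (x : V → ℝ) :
    Prop where
  pos : ∀ v ∈ S, 0 < x v
  eq_zero : ∀ v ∉ S, x v = 0
  mulVec_le : ∀ v ∈ S, (B *ᵥ x) v ≤ r * x v

variable [Fintype V] {B B' : Matrix V V ℝ} {S T : Set V} {r : ℝ} {x : V → ℝ}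

lemma IsSubinvariantOn.nonneg (hx : IsSubinvariantOn B S r x) : 0 ≤ x := fun v => by
  by_cases hv : v ∈ S
  · exact (hx.pos v hv).le
  · exact (hx.eq_zero v hv).ge

lemma sum_subtype_mul_eq_mulVec [Fintype S] (hx : ∀ v ∉ S, x v = 0) (v : V) :
    ∑ w : S, B v w * x w = (B *ᵥ x) v :=
  Fintype.sum_of_injective Subtype.val Subtype.val_injective _ _
    (fun w hw => by simp [hx w (by simpa using hw)]) fun _ => rfl

lemma specRadOn_eq_specRad_submatrix (B : Matrix V V ℝ) (S : Set V) [Fintype S] [DecidableEq S] :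
    specRadOn B S = specRad (B.submatrix ((↑) : S → V) (↑)) := by
  obtain rfl : ‹Fintype S› = S.toFinite.fintype := Subsingleton.elim _ _
  obtain rfl : ‹DecidableEq S› = Classical.decEq S := Subsingleton.elim _ _
  rfl

lemma specRadOn_le_of_isSubinvariantOn (hB : ∀ v w, 0 ≤ B v w) (hr : 0 ≤ r)
    (hx : IsSubinvariantOn B S r x) : specRadOn B S ≤ r := by
  classical
  rw [specRadOn_eq_specRad_submatrix]
  refine specRad_le_of_mulVec_le (x := fun v : S => x v) (fun v w => hB v w)
    (fun v => hx.pos v v.2) hr fun v => ?_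
  exact (sum_subtype_mul_eq_mulVec hx.eq_zero (v : V)).trans_le (hx.mulVec_le v v.2)

lemma specRadOn_nonneg (hB : ∀ v w, 0 ≤ B v w) : 0 ≤ specRadOn B S := by
  classical
  rw [specRadOn_eq_specRad_submatrix]
  exact specRad_nonneg fun _ _ => hB _ _

lemma exists_isSubinvariantOn (hB : ∀ v w, 0 ≤ B v w) (h : specRadOn B S < r) :
    ∃ x, IsSubinvariantOn B S r x := by
  classical
  rw [specRadOn_eq_specRad_submatrix] at h
  obtain ⟨x, hx, mulVec_le⟩ := exists_pos_mulVec_le_of_specRad_lt (fun _ _ => hB _ _) h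
  have extend_apply (v : S) : Function.extend Subtype.val x 0 (v : V) = x v :=
    Subtype.val_injective.extend_apply x 0 v
  have extend_eq_zero (v : V) (hv : v ∉ S) : Function.extend Subtype.val x 0 v = 0 :=
    Function.extend_apply' _ _ _ (by simpa using hv)
  refine ⟨_, fun v hv => ?_, extend_eq_zero, fun v hv => ?_⟩
  · exact (hx ⟨v, hv⟩).trans_eq (extend_apply ⟨v, hv⟩).symm
  · rw [← sum_subtype_mul_eq_mulVec extend_eq_zero, extend_apply ⟨v, hv⟩]
    simp only [extend_apply]
    exact mulVec_le ⟨v, hv⟩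

lemma specRadOn_le_of_gauge {q : V → ℝ} {c : ℝ} (hB : ∀ v w, 0 ≤ B v w)
    (hB' : ∀ v w, 0 ≤ B' v w) (hq : ∀ v, 0 < q v) (hc : 0 < c)
    (h : ∀ v ∈ S, ∀ w ∈ S, B' v w * q w ≤ c * q v * B v w) :
    specRadOn B' S ≤ c * specRadOn B S := by
  rw [← div_le_iff₀' hc]
  refine le_of_forall_gt_imp_ge_of_dense fun r hr => ?_
  obtain ⟨x, hx⟩ := exists_isSubinvariantOn hB hr
  rw [div_le_iff₀' hc]
  refine specRadOn_le_of_isSubinvariantOn hB'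
    (mul_nonneg hc.le ((specRadOn_nonneg hB).trans hr.le)) (x := q * x)
    ⟨fun v hv => mul_pos (hq v) (hx.pos v hv), fun v hv => by simp [hx.eq_zero v hv],
      fun v hv => ?_⟩
  have entry_le (w : V) : B' v w * (q w * x w) ≤ c * q v * (B v w * x w) := by
    by_cases hw : w ∈ S
    · simpa only [mul_assoc] using mul_le_mul_of_nonneg_right (h v hv w hw) (hx.nonneg w)
    · simp [hx.eq_zero w hw]
  calc (B' *ᵥ (q * x)) v ≤ ∑ w, c * q v * (B v w * x w) := sum_le_sum fun w _ => entry_le w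
    _ = c * q v * (B *ᵥ x) v := (mul_sum ..).symm
    _ ≤ c * q v * (r * x v) :=
      mul_le_mul_of_nonneg_left (hx.mulVec_le v hv) (mul_pos hc (hq v)).le
    _ = c * r * (q * x) v := by rw [Pi.mul_apply]; ring

lemma specRadOn_mono_set (hB : ∀ v w, 0 ≤ B v w) (hST : S ⊆ T) :
    specRadOn B S ≤ specRadOn B T := by
  refine le_of_forall_gt_imp_ge_of_dense fun r hr => ?_
  obtain ⟨x, hx⟩ := exists_isSubinvariantOn hB hr
  refine specRadOn_le_of_isSubinvariantOn hB ((specRadOn_nonneg hB).trans hr.le)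
    (x := S.indicator x)
    ⟨fun v hv => by simpa [hv] using hx.pos v (hST hv), fun v hv => by simp [hv], fun v hv => ?_⟩
  rw [Set.indicator_of_mem hv]
  exact (mulVec_le_mulVec_of_nonneg hB (Set.indicator_le_self' fun w _ => hx.nonneg w) v).trans
    (hx.mulVec_le v (hST hv))

lemma specRadOn_eq_zero (hB : ∀ v w, 0 ≤ B v w) (h : ∀ v ∈ S, ∀ w ∈ S, B v w = 0) :
    specRadOn B S = 0 := by
  refine (specRadOn_le_of_isSubinvariantOn hB le_rfl (x := S.indicator 1)
    ⟨fun v hv => by simp [hv], fun v hv => by simp [hv], fun v hv => ?_⟩).antisymm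
    (specRadOn_nonneg hB)
  rw [zero_mul]
  refine (sum_eq_zero fun w _ => ?_).le
  by_cases hw : w ∈ S <;> simp [hw, h v hv]

lemma exists_pos_forall_mul_le {ι : Type*} {s : Set ι} (hs : s.Finite) (a : ι → ℝ) {b : ι → ℝ}
    (hb : ∀ i ∈ s, 0 < b i) : ∃ ε > 0, ∀ i ∈ s, ε * a i ≤ b i := by
  have small (i : ι) (hi : i ∈ s) : ∀ᶠ ε in nhdsWithin (0 : ℝ) (Set.Ioi 0), ε * a i ≤ b i := by
    have tendsto_zero : Tendsto (· * a i) (nhdsWithin (0 : ℝ) (Set.Ioi 0)) (nhds 0) := by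
      simpa using (continuous_mul_const (a i)).continuousWithinAt (s := Set.Ioi 0) (x := (0 : ℝ))
        |>.tendsto
    exact tendsto_zero.eventually_le_const (hb i hi)
  exact (eventually_mem_nhdsWithin.and ((eventually_all_finite hs).2 small)).exists

lemma specRadOn_union_lt (hB : ∀ v w, 0 ≤ B v w) (hST : ∀ v ∈ S, ∀ w ∈ T, B v w = 0)
    (hS : specRadOn B S < r) (hT : specRadOn B T < r) : specRadOn B (S ∪ T) < r := by
  obtain ⟨r', hr', hr'r⟩ := exists_between (max_lt hS hT)
  obtain ⟨r'', hr'', hr''r'⟩ := exists_between hr'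
  obtain ⟨x, hx⟩ := exists_isSubinvariantOn hB ((le_max_left _ _).trans_lt hr'')
  obtain ⟨y, hy⟩ := exists_isSubinvariantOn hB ((le_max_right _ _).trans_lt hr'')
  -- As `S` does not see `T`, adding to `y` a small multiple of `x` works on both blocks at once.
  have hr'_nonneg : 0 ≤ r' := ((specRadOn_nonneg hB).trans (le_max_left _ _)).trans hr'.le
  obtain ⟨ε, hε, absorb⟩ := exists_pos_forall_mul_le T.toFinite (B *ᵥ x)
    (b := fun v => (r' - r'') * y v) fun v hv => mul_pos (sub_pos.2 hr''r') (hy.pos v hv)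
  have mulVec_eq (v : V) : (B *ᵥ (y + ε • x)) v = (B *ᵥ y) v + ε * (B *ᵥ x) v := by
    simp [Matrix.mulVec_add, Matrix.mulVec_smul]
  refine (specRadOn_le_of_isSubinvariantOn hB hr'_nonneg (x := y + ε • x)
    ⟨fun v hv => ?_, fun v hv => ?_, fun v hv => ?_⟩).trans_lt hr'r
  · rcases hv with hv | hv
    · exact add_pos_of_nonneg_of_pos (hy.nonneg v) (mul_pos hε (hx.pos v hv))
    · exact add_pos_of_pos_of_nonneg (hy.pos v hv) (mul_nonneg hε.le (hx.nonneg v))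
  · simp [hx.eq_zero v (mt Or.inl hv), hy.eq_zero v (mt Or.inr hv)]
  · have hεx : 0 ≤ ε * x v := mul_nonneg hε.le (hx.nonneg v)
    rw [mulVec_eq, Pi.add_apply, Pi.smul_apply, smul_eq_mul]
    rcases hv with hv | hv
    · have mulVec_y : (B *ᵥ y) v = 0 := sum_eq_zero fun w _ => by
        by_cases hw : w ∈ T <;> simp [hST v hv, hy.eq_zero, hw]
      have mulVec_x := mul_le_mul_of_nonneg_left (hx.mulVec_le v hv) hε.le
      have slack := mul_nonneg (sub_pos.2 hr''r').le hεx
      linarith [mul_nonneg hr'_nonneg (hy.nonneg v)]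
    · linarith [hy.mulVec_le v hv, absorb v hv, mul_nonneg hr'_nonneg hεx]

lemma specRadOn_lt_of_forall_class_lt [Preorder V] (hB : ∀ v w, 0 ≤ B v w)
    (h_le : ∀ v w, B v w ≠ 0 → v ≤ w) (hr : 0 < r)
    (h : ∀ v ∈ S, specRadOn B {w | v ≤ w ∧ w ≤ v} < r) : specRadOn B S < r := by
  induction S using WellFoundedLT.induction with
  | ind S ih =>
    rcases S.eq_empty_or_nonempty with rfl | hS
    · rwa [specRadOn_eq_zero hB (by simp)]
    obtain ⟨m, hmS, hm⟩ := S.toFinite.exists_maximal hS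
    have diff_ssubset : S \ {w | m ≤ w ∧ w ≤ m} ⊂ S :=
      Set.sdiff_ssubset_left_iff.2 ⟨m, hmS, le_rfl, le_rfl⟩
    have rest_lt := ih _ diff_ssubset fun v hv => h v hv.1
    have eq_zero : ∀ v ∈ {w | m ≤ w ∧ w ≤ m}, ∀ w ∈ S \ {w | m ≤ w ∧ w ≤ m}, B v w = 0 :=
      fun v hv w hw => by_contra fun hvw => hw.2
        ⟨hv.1.trans (h_le v w hvw), hm hw.1 (hv.1.trans (h_le v w hvw))⟩
    refine (specRadOn_mono_set hB fun v hv => ?_).trans_lt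
      (specRadOn_union_lt hB eq_zero (h m hmS) rest_lt)
    exact or_iff_not_imp_left.2 fun hvm => ⟨hv, hvm⟩

end SpecRadOn

section Paths

variable {src rng : E → V} {S T : Set V} {u v w : V} {e f : E} {μ μ' : List E}

/-- `μ` is a path from `v` to `w`, possibly of length `0`, whose edges have both endpoints in `S`.
The recursion on `μ` makes concatenation easier to handle than `ChainOK`, and treats the empty path
uniformly. -/
def PathIn (src rng : E → V) (S : Set V) : V → List E → V → Prop
  | v, [], w => v = w
  | v, e :: μ, w => src e = v ∧ (src e ∈ S ∧ rng e ∈ S) ∧ PathIn src rng S (rng e) μ w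

lemma pathIn_append_iff :
    PathIn src rng S u (μ ++ μ') w ↔ ∃ v, PathIn src rng S u μ v ∧ PathIn src rng S v μ' w := by
  induction μ generalizing u with
  | nil => simp [PathIn]
  | cons e μ ih => simp only [List.cons_append, PathIn, ih]; tauto

lemma chainOK_cons_cons :
    ChainOK src rng (e :: f :: μ) ↔ rng e = src f ∧ ChainOK src rng (f :: μ) :=
  List.isChain_cons_cons

lemma pathIn_iff_chainOK (hμ : μ ≠ []) :
    PathIn src rng S v μ w ↔ (∀ e ∈ μ, src e ∈ S ∧ rng e ∈ S) ∧
      ChainOK src rng μ ∧ src (μ.head hμ) = v ∧ rng (μ.getLast hμ) = w := by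
  induction μ generalizing v with
  | nil => exact absurd rfl hμ
  | cons e μ ih =>
    cases μ with
    | nil =>
      have chain : ChainOK src rng [e] := List.isChain_singleton e
      simp only [PathIn, List.forall_mem_singleton, List.head_cons, List.getLast_singleton]
      tauto
    | cons f μ =>
      rw [PathIn, ih (List.cons_ne_nil f μ), chainOK_cons_cons, List.forall_mem_cons (a := e)]
      simp only [List.head_cons, List.getLast_cons_cons, eq_comm (a := src f)]
      tauto

lemma loopIn_iff_pathIn :
    LoopIn src rng S μ ↔ μ ≠ [] ∧ ∃ v, PathIn src rng S v μ v := by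
  constructor
  · rintro ⟨⟨hμ, chain, closed⟩, mem⟩
    exact ⟨hμ, _, (pathIn_iff_chainOK hμ).2 ⟨mem, chain, rfl, closed.symm⟩⟩
  · rintro ⟨hμ, v, path⟩
    obtain ⟨mem, chain, head_eq, last_eq⟩ := (pathIn_iff_chainOK hμ).1 path
    exact ⟨⟨hμ, chain, head_eq.trans last_eq.symm⟩, mem⟩

lemma gReaches_iff_pathIn :
    GReaches src rng v w ↔ ∃ μ, PathIn src rng Set.univ v μ w := by
  constructor
  · rintro (rfl | ⟨μ, hμ, path⟩)
    · exact ⟨[], rfl⟩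
    · exact ⟨μ, (pathIn_iff_chainOK hμ).2 ⟨by simp, path⟩⟩
  · rintro ⟨μ, path⟩
    by_cases hμ : μ = []
    · subst hμ
      exact .inl path
    · exact .inr ⟨μ, hμ, ((pathIn_iff_chainOK hμ).1 path).2⟩

lemma LoopIn.length_ne_zero (h : LoopIn src rng S μ) : μ.length ≠ 0 :=
  mt List.length_eq_zero_iff.1 h.1.1

lemma LoopIn.mono (h : LoopIn src rng S μ) (hST : S ⊆ T) : LoopIn src rng T μ :=
  ⟨h.1, fun e he => ⟨hST (h.2 e he).1, hST (h.2 e he).2⟩⟩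

lemma GReaches.refl (src rng : E → V) (v : V) : GReaches src rng v v := .inl rfl

lemma GReaches.trans (huv : GReaches src rng u v) (hvw : GReaches src rng v w) :
    GReaches src rng u w := by
  obtain ⟨μ, hμ⟩ := gReaches_iff_pathIn.1 huv
  obtain ⟨μ', hμ'⟩ := gReaches_iff_pathIn.1 hvw
  exact gReaches_iff_pathIn.2 ⟨μ ++ μ', pathIn_append_iff.2 ⟨v, hμ, hμ'⟩⟩

lemma gReaches_edge (src rng : E → V) (e : E) : GReaches src rng (src e) (rng e) :=
  gReaches_iff_pathIn.2 ⟨[e], rfl, ⟨trivial, trivial⟩, rfl⟩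

/-- The equivalence class of `v` under mutual reachability; it is a component if it contains a
loop. -/
def GClass (src rng : E → V) (v : V) : Set V :=
  {w | GReaches src rng v w ∧ GReaches src rng w v}

lemma gClass_eq_of_mem (h : w ∈ GClass src rng v) : GClass src rng w = GClass src rng v := by
  ext u
  exact ⟨fun hu => ⟨h.1.trans hu.1, hu.2.trans h.2⟩, fun hu => ⟨h.2.trans hu.1, hu.2.trans h.1⟩⟩

lemma PathIn.in_gClass (h : PathIn src rng Set.univ v μ w) (hv : GReaches src rng u v)
    (hw : GReaches src rng w u) : PathIn src rng (GClass src rng u) v μ w := by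
  induction μ generalizing v with
  | nil => exact h
  | cons e μ ih =>
    obtain ⟨rfl, -, tail⟩ := h
    have edge := gReaches_edge src rng e
    have rng_to_u := (gReaches_iff_pathIn.2 ⟨μ, tail⟩).trans hw
    exact ⟨rfl, ⟨⟨hv, edge.trans rng_to_u⟩, hv.trans edge, rng_to_u⟩, ih tail (hv.trans edge)⟩

end Paths

section FeasiblePotential

variable {src rng : E → V} {F g : E → ℝ} {S : Set V} {v w : V} {e : E} {μ μ' : List E}

@[simp] lemma fpath_nil : Fpath F [] = 0 := rfl

@[simp] lemma fpath_cons : Fpath F (e :: μ) = F e + Fpath F μ := List.sum_cons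

@[simp] lemma fpath_append : Fpath F (μ ++ μ') = Fpath F μ + Fpath F μ' := by
  simp [Fpath]

lemma fpath_sub_const (F : E → ℝ) (c : ℝ) (μ : List E) :
    Fpath (fun e => F e - c) μ = Fpath F μ - c * μ.length := by
  induction μ with
  | nil => simp
  | cons e μ ih => simp only [fpath_cons, ih, List.length_cons]; push_cast; ring

lemma finite_setOf_nodup_map_src [Finite V] [Finite E] (src : E → V) :
    {μ : List E | (μ.map src).Nodup}.Finite := by
  have := Fintype.ofFinite V
  refine (List.finite_length_le E (Fintype.card V)).subset fun μ hμ => ?_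
  simpa using List.Nodup.length_le_card hμ

lemma PathIn.exists_nodup_fpath_le
    (hg : ∀ μ, LoopIn src rng S μ → (μ.map src).Nodup → 0 ≤ Fpath g μ)
    (hμ : PathIn src rng S v μ w) :
    ∃ μ', PathIn src rng S v μ' w ∧ (μ'.map src).Nodup ∧ Fpath g μ' ≤ Fpath g μ := by
  induction μ generalizing v with
  | nil => exact ⟨[], hμ, by simp, le_rfl⟩
  | cons e μ ih =>
    obtain ⟨rfl, he, tail⟩ := hμ
    obtain ⟨μ', path, nodup, fpath_le⟩ := ih tail
    by_cases revisits : src e ∈ μ'.map src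
    · obtain ⟨f, hf, hfe⟩ := List.mem_map.1 revisits
      obtain ⟨a, b, rfl⟩ := List.append_of_mem hf
      obtain ⟨u, path_a, rfl, path_b⟩ := pathIn_append_iff.1 path
      rw [List.map_append, List.map_cons, List.nodup_middle, List.nodup_cons, hfe,
        List.mem_append, not_or] at nodup
      have loop : LoopIn src rng S (e :: a) :=
        loopIn_iff_pathIn.2 ⟨List.cons_ne_nil e a, src e, rfl, he, hfe ▸ path_a⟩
      have loop_nonneg := hg (e :: a) loop (List.nodup_cons.2 ⟨nodup.1.1, nodup.2.of_append_left⟩)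
      refine ⟨f :: b, ⟨hfe, path_b⟩, ?_, ?_⟩
      · exact List.nodup_cons.2 ⟨hfe ▸ nodup.1.2, nodup.2.of_append_right⟩
      · simp only [fpath_cons, fpath_append] at loop_nonneg fpath_le ⊢
        linarith
    · exact ⟨e :: μ', ⟨rfl, he, path⟩, List.nodup_cons.2 ⟨revisits, nodup⟩, by simpa using fpath_le⟩

lemma exists_potential_of_loops_nonneg [Finite V] [Finite E]
    (hg : ∀ μ, LoopIn src rng S μ → (μ.map src).Nodup → 0 ≤ Fpath g μ) :
    ∃ h : V → ℝ, ∀ e, src e ∈ S → rng e ∈ S → h (src e) ≤ g e + h (rng e) := by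
  have exists_lightest (v : V) : ∃ μ, (∃ w, PathIn src rng S v μ w) ∧
      ∀ μ' w, PathIn src rng S v μ' w → Fpath g μ ≤ Fpath g μ' := by
    obtain ⟨μ, ⟨-, path⟩, lightest⟩ := Set.exists_min_image
      {μ | (μ.map src).Nodup ∧ ∃ w, PathIn src rng S v μ w} (Fpath g)
      ((finite_setOf_nodup_map_src src).subset fun _ h => h.1) ⟨[], by simp, v, rfl⟩
    refine ⟨μ, path, fun μ' w path' => ?_⟩
    obtain ⟨μ'', path'', nodup, fpath_le⟩ := path'.exists_nodup_fpath_le hg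
    exact (lightest μ'' ⟨nodup, w, path''⟩).trans fpath_le
  choose m path lightest using exists_lightest
  refine ⟨fun v => Fpath g (m v), fun e hs hr => ?_⟩
  obtain ⟨w, path_rng⟩ := path (rng e)
  simpa using lightest (src e) (e :: m (rng e)) w ⟨rfl, ⟨hs, hr⟩, path_rng⟩

lemma exists_potential_of_loops_pos [Finite V] [Finite E]
    (hF : ∀ μ, LoopIn src rng S μ → 0 < Fpath F μ) :
    ∃ δ > 0, ∃ h : V → ℝ, ∀ e, src e ∈ S → rng e ∈ S → h (src e) + δ ≤ F e + h (rng e) := by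
  obtain ⟨δ, hδ, mul_length_le⟩ := exists_pos_forall_mul_le
    (s := {μ | (μ.map src).Nodup ∧ LoopIn src rng S μ})
    ((finite_setOf_nodup_map_src src).subset fun _ h => h.1) (fun μ => (μ.length : ℝ))
    fun μ hμ => hF μ hμ.2
  obtain ⟨h, h_le⟩ := exists_potential_of_loops_nonneg (g := fun e => F e - δ) (S := S)
    fun μ loop nodup => by
      rw [fpath_sub_const]
      exact sub_nonneg.2 (mul_length_le μ ⟨nodup, loop⟩)
  exact ⟨δ, hδ, h, fun e hs hr => by linarith [h_le e hs hr]⟩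

end FeasiblePotential

section Amat

open scoped Matrix

variable [DecidableEq V] [Fintype E] {src rng : E → V} {F : E → ℝ} {β β' r : ℝ} {S : Set V}
  {v w : V} {x : V → ℝ} {μ : List E}

lemma amat_nonneg (src rng : E → V) (F : E → ℝ) (β : ℝ) (v w : V) :
    0 ≤ Amat src rng F β v w :=
  sum_nonneg fun _ _ => (Real.exp_pos _).le

lemma exists_edge_of_amat_ne_zero (h : Amat src rng F β v w ≠ 0) :
    ∃ e, src e = v ∧ rng e = w := by
  obtain ⟨e, he, -⟩ := exists_ne_zero_of_sum_ne_zero h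
  exact ⟨e, (mem_filter.1 he).2⟩

variable [Fintype V]

lemma amat_mulVec (src rng : E → V) (F : E → ℝ) (β : ℝ) (x : V → ℝ) (v : V) :
    (Amat src rng F β *ᵥ x) v = ∑ e with src e = v, Real.exp (-β * F e) * x (rng e) := by
  simp only [Matrix.mulVec, dotProduct, Amat, sum_mul]
  rw [← sum_fiberwise (g := rng)]
  refine sum_congr rfl fun w _ => ?_
  rw [filter_filter]
  exact sum_congr rfl fun e he => by rw [(mem_filter.1 he).2.2]

lemma IsSubinvariantOn.exp_fpath_mul_le (hx : IsSubinvariantOn (Amat src rng F β) S r x)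
    (hr : 0 ≤ r) (hμ : PathIn src rng S v μ w) :
    Real.exp (-β * Fpath F μ) * x w ≤ r ^ μ.length * x v := by
  induction μ generalizing v with
  | nil => simp [show v = w from hμ]
  | cons e μ ih =>
    obtain ⟨rfl, he, tail⟩ := hμ
    have edge_le : Real.exp (-β * F e) * x (rng e) ≤ (Amat src rng F β *ᵥ x) (src e) := by
      rw [amat_mulVec]
      exact single_le_sum (f := fun e => Real.exp (-β * F e) * x (rng e))
        (fun f _ => mul_nonneg (Real.exp_pos _).le (hx.nonneg _)) (by simp)
    calc Real.exp (-β * Fpath F (e :: μ)) * x w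
        = Real.exp (-β * F e) * (Real.exp (-β * Fpath F μ) * x w) := by
          rw [fpath_cons, mul_add, Real.exp_add, mul_assoc]
      _ ≤ Real.exp (-β * F e) * (r ^ μ.length * x (rng e)) :=
          mul_le_mul_of_nonneg_left (ih tail) (Real.exp_pos _).le
      _ = r ^ μ.length * (Real.exp (-β * F e) * x (rng e)) := mul_left_comm ..
      _ ≤ r ^ μ.length * (r * x (src e)) :=
          mul_le_mul_of_nonneg_left (edge_le.trans (hx.mulVec_le _ he.1)) (by positivity)
      _ = r ^ (e :: μ).length * x (src e) := by rw [List.length_cons, pow_succ, mul_assoc]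

lemma LoopIn.exp_fpath_le_specRadOn_pow (hμ : LoopIn src rng S μ) (F : E → ℝ) (β : ℝ) :
    Real.exp (-β * Fpath F μ) ≤ specRadOn (Amat src rng F β) S ^ μ.length := by
  obtain ⟨hμ_ne, v, path⟩ := loopIn_iff_pathIn.1 hμ
  have hv : v ∈ S := by
    obtain ⟨mem, -, head_eq, -⟩ := (pathIn_iff_chainOK hμ_ne).1 path
    exact head_eq ▸ (mem _ (List.head_mem hμ_ne)).1
  refine ge_of_tendsto ((continuous_pow μ.length).continuousWithinAt
    (s := Set.Ioi (specRadOn (Amat src rng F β) S))) (eventually_mem_nhdsWithin.mono fun r hr => ?_)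
  have hB := amat_nonneg src rng F β
  obtain ⟨x, hx⟩ := exists_isSubinvariantOn hB hr
  exact le_of_mul_le_mul_right
    (hx.exp_fpath_mul_le ((specRadOn_nonneg hB).trans (le_of_lt hr)) path) (hx.pos v hv)

lemma specRadOn_amat_le_of_potential {p : V → ℝ} {d : ℝ}
    (h : ∀ e, src e ∈ S → rng e ∈ S → -β * F e + p (rng e) ≤ d + p (src e) + -β' * F e) :
    specRadOn (Amat src rng F β) S ≤ Real.exp d * specRadOn (Amat src rng F β') S := by
  refine specRadOn_le_of_gauge (q := fun v => Real.exp (p v)) (amat_nonneg src rng F β')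
    (amat_nonneg src rng F β) (fun v => Real.exp_pos _) (Real.exp_pos d) fun v hv w hw => ?_
  simp only [Amat, sum_mul, mul_sum]
  refine sum_le_sum fun e he => ?_
  obtain ⟨-, rfl, rfl⟩ := mem_filter.1 he
  simpa only [Real.exp_add] using Real.exp_le_exp.2 (h e hv hw)

lemma exists_specRadOn_amat_le_exp_neg_mul (hF : ∀ μ, LoopIn src rng S μ → 0 < Fpath F μ) :
    ∃ δ > 0, ∀ β' β : ℝ, β' ≤ β → specRadOn (Amat src rng F β) S ≤
      Real.exp (-((β - β') * δ)) * specRadOn (Amat src rng F β') S := by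
  obtain ⟨δ, hδ, h, h_le⟩ := exists_potential_of_loops_pos hF
  refine ⟨δ, hδ, fun β' β hβ => specRadOn_amat_le_of_potential (p := fun v => -((β - β') * h v))
    fun e hs hr => ?_⟩
  linarith [mul_le_mul_of_nonneg_left (h_le e hs hr) (sub_nonneg.2 hβ)]

lemma specRadOn_amat_le_exp_mul_abs_sub (src rng : E → V) (F : E → ℝ) (S : Set V) (β β' : ℝ) :
    specRadOn (Amat src rng F β) S ≤
      Real.exp ((∑ e, |F e|) * |β - β'|) * specRadOn (Amat src rng F β') S := by
  refine specRadOn_amat_le_of_potential (p := 0) fun e _ _ => ?_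
  have abs_le_sum : |F e| ≤ ∑ e, |F e| :=
    single_le_sum (f := fun e => |F e|) (fun _ _ => abs_nonneg _) (mem_univ e)
  have diff_le : (β' - β) * F e ≤ |F e| * |β - β'| := by
    rw [mul_comm, abs_sub_comm, ← abs_mul]
    exact le_abs_self _
  simp only [Pi.zero_apply]
  linarith [mul_le_mul_of_nonneg_right abs_le_sum (abs_nonneg (β - β'))]

lemma continuous_specRadOn_amat (src rng : E → V) (F : E → ℝ) (S : Set V) :
    Continuous fun β => specRadOn (Amat src rng F β) S := by
  refine continuous_iff_continuousAt.2 fun b => tendsto_of_tendsto_of_tendsto_of_le_of_le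
    (g := fun β => Real.exp (-((∑ e, |F e|) * |β - b|)) * specRadOn (Amat src rng F b) S)
    (h := fun β => Real.exp ((∑ e, |F e|) * |β - b|) * specRadOn (Amat src rng F b) S)
    (Continuous.tendsto' (by fun_prop) _ _ (by simp))
    (Continuous.tendsto' (by fun_prop) _ _ (by simp)) (fun β => ?_)
    fun β => specRadOn_amat_le_exp_mul_abs_sub src rng F S β b
  simp only
  rw [Real.exp_neg, inv_mul_le_iff₀ (Real.exp_pos _), abs_sub_comm]
  exact specRadOn_amat_le_exp_mul_abs_sub src rng F S b β

lemma exists_lt_specRadOn_amat_eq_one (hβ : 0 < β) (hμ : LoopIn src rng S μ)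
    (h : specRadOn (Amat src rng F β) S < 1) :
    ∃ β' < β, specRadOn (Amat src rng F β') S = 1 := by
  have one_le : 1 ≤ specRadOn (Amat src rng F 0) S := by
    have one_le_pow := hμ.exp_fpath_le_specRadOn_pow F 0
    rw [neg_zero, zero_mul, Real.exp_zero] at one_le_pow
    exact (one_le_pow_iff_of_nonneg (specRadOn_nonneg (amat_nonneg src rng F 0))
      hμ.length_ne_zero).1 one_le_pow
  obtain ⟨β', hβ', eq_one⟩ := intermediate_value_Icc' hβ.le
    (continuous_specRadOn_amat src rng F S).continuousOn ⟨h.le, one_le⟩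
  exact ⟨β', hβ'.2.lt_of_ne fun hb => h.ne (hb ▸ eq_one), eq_one⟩

end Amat

section Components

variable {src rng : E → V} {S : Set V} {v w : V}

/-- Reachability as a preorder on the vertices. Its equivalence classes are the sets `GClass`. -/
abbrev reachPreorder (src rng : E → V) : Preorder V where
  le := GReaches src rng
  le_refl := GReaches.refl src rng
  le_trans _ _ _ := GReaches.trans

lemma GIsComponent.gClass_subset_closure_diff (hS : GIsComponent src rng S)
    (hv : v ∈ GClosure src rng S \ S) : GClass src rng v ⊆ GClosure src rng S \ S := by
  obtain ⟨⟨⟨s, hs, v_to_s⟩, hvS⟩, ⟨⟨c, rfl⟩, -⟩⟩ := And.intro hv hS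
  refine fun w hw => ⟨⟨s, hs, hw.2.trans v_to_s⟩, fun hwS => hvS ?_⟩
  exact (gClass_eq_of_mem hwS).subset (⟨hw.2, hw.1⟩ : v ∈ GClass src rng w)

variable [DecidableEq V] [Fintype V] [Fintype E] {F : E → ℝ} {β β' : ℝ} {μ : List E}

lemma LoopIn.fpath_pos_of_specRadOn_lt_one (hμ : LoopIn src rng S μ) (hβ : 0 < β)
    (h : specRadOn (Amat src rng F β) S < 1) : 0 < Fpath F μ := by
  have exp_lt_one := (hμ.exp_fpath_le_specRadOn_pow F β).trans_lt
    (pow_lt_one₀ (specRadOn_nonneg (amat_nonneg src rng F β)) h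
      hμ.length_ne_zero)
  rw [Real.exp_lt_one_iff, neg_mul, neg_neg_iff_pos] at exp_lt_one
  exact pos_of_mul_pos_right exp_lt_one hβ.le

lemma specRadOn_amat_lt_one_of_lt (hF : ∀ μ, LoopIn src rng S μ → 0 < Fpath F μ) (hβ : β' < β)
    (h : specRadOn (Amat src rng F β') S ≤ 1) : specRadOn (Amat src rng F β) S < 1 := by
  obtain ⟨δ, hδ, decay⟩ := exists_specRadOn_amat_le_exp_neg_mul hF
  calc specRadOn (Amat src rng F β) S
      ≤ Real.exp (-((β - β') * δ)) * specRadOn (Amat src rng F β') S := decay β' β hβ.le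
    _ ≤ Real.exp (-((β - β') * δ)) := mul_le_of_le_one_right (Real.exp_pos _).le h
    _ < 1 := Real.exp_lt_one_iff.2 (neg_neg_iff_pos.2 (mul_pos (sub_pos.2 hβ) hδ))

lemma specRadOn_amat_gClass_eq_zero (h : ∀ μ, ¬LoopIn src rng (GClass src rng v) μ) :
    specRadOn (Amat src rng F β) (GClass src rng v) = 0 := by
  refine specRadOn_eq_zero (amat_nonneg src rng F β) fun u hu w hw => by_contra fun hne => ?_
  obtain ⟨e, rfl, rfl⟩ := exists_edge_of_amat_ne_zero hne
  obtain ⟨μ, path⟩ := gReaches_iff_pathIn.1 (hw.2.trans hu.1)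
  exact h (e :: μ) (loopIn_iff_pathIn.2
    ⟨List.cons_ne_nil e μ, src e, rfl, ⟨hu, hw⟩, path.in_gClass hw.1 hu.2⟩)

lemma specRadOn_amat_lt_one_iff (hβ : 0 < β) (hS : ∀ v ∈ S, GClass src rng v ⊆ S) :
    specRadOn (Amat src rng F β) S < 1 ↔
      (∀ μ, LoopIn src rng S μ → 0 < Fpath F μ) ∧
      ∀ C, GIsComponent src rng C → C ⊆ S →
        ∃ β' < β, specRadOn (Amat src rng F β') C = 1 := by
  have hB := amat_nonneg src rng F β
  constructor
  · intro h
    refine ⟨fun μ hμ => hμ.fpath_pos_of_specRadOn_lt_one hβ h, fun C hC hCS => ?_⟩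
    obtain ⟨μ, hμ⟩ := hC.2
    exact exists_lt_specRadOn_amat_eq_one hβ hμ ((specRadOn_mono_set hB hCS).trans_lt h)
  · rintro ⟨loops_pos, components⟩
    let _ := reachPreorder src rng
    refine specRadOn_lt_of_forall_class_lt hB (fun v w hvw => ?_) one_pos fun v hv => ?_
    · obtain ⟨e, rfl, rfl⟩ := exists_edge_of_amat_ne_zero hvw
      exact gReaches_edge src rng e
    change specRadOn (Amat src rng F β) (GClass src rng v) < 1
    by_cases has_loop : ∃ μ, LoopIn src rng (GClass src rng v) μ
    · obtain ⟨β', hβ', eq_one⟩ := components _ ⟨⟨v, rfl⟩, has_loop⟩ (hS v hv)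
      exact specRadOn_amat_lt_one_of_lt (fun μ hμ => loops_pos μ (hμ.mono (hS v hv))) hβ' eq_one.le
    · exact (specRadOn_amat_gClass_eq_zero (not_exists.1 has_loop)).trans_lt one_pos

end Components

section Circular

open scoped Matrix

variable {src rng : E → V} {F g : E → ℝ} {C : Set V} {ν : List E}

lemma exists_potential_of_loop_eq_zero (hν : IsLoop src rng ν) (nodup : (ν.map src).Nodup)
    (hg : Fpath g ν = 0) :
    ∃ h : V → ℝ, ∀ e ∈ ν, h (src e) = g e + h (rng e) := by
  classical
  have dropWhile_eq (e : E) (a b : List E) (hab : ν = a ++ e :: b) :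
      ν.dropWhile (src · ≠ src e) = e :: b := by
    subst hab
    rw [List.map_append, List.map_cons, List.nodup_middle, List.nodup_cons] at nodup
    have src_ne (f : E) (hf : f ∈ a) : src f ≠ src e := fun hfe =>
      nodup.1 (List.mem_append_left _ (List.mem_map.2 ⟨f, hf, hfe⟩))
    rw [List.dropWhile_append_of_pos fun f hf => by simpa using src_ne f hf]
    simp
  obtain ⟨-, v, path⟩ := loopIn_iff_pathIn.1 (⟨hν, by simp⟩ : LoopIn src rng Set.univ ν)
  -- The potential of `v` is the weight of the part of `ν` from `v` on.
  refine ⟨fun v => Fpath g (ν.dropWhile (src · ≠ v)), fun e he => ?_⟩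
  obtain ⟨a, b, hab⟩ := List.append_of_mem he
  have fpath_rng : Fpath g (ν.dropWhile (src · ≠ rng e)) = Fpath g b := by
    obtain ⟨-, -, -, -, path_b⟩ := pathIn_append_iff.1 (hab ▸ path)
    cases b with
    | nil =>
      obtain ⟨f, ν', hf⟩ := List.exists_cons_of_ne_nil (List.ne_nil_of_mem he)
      have src_head : src f = rng e := (hf ▸ path).1.trans (Eq.symm path_b)
      rw [← src_head, dropWhile_eq f [] ν' hf, ← hf, hg, fpath_nil]
    | cons f b => rw [← path_b.1, dropWhile_eq f (a ++ [e]) b (by simp [hab])]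
  simp only [dropWhile_eq e a b hab, fpath_rng, fpath_cons]

variable [DecidableEq V] [Fintype V] [Fintype E] {β : ℝ}

lemma CircularWitness.specRadOn_amat_le (hν : CircularWitness src rng C ν) (F : E → ℝ) (β : ℝ) :
    specRadOn (Amat src rng F β) C ≤ Real.exp (-β * (Fpath F ν / ν.length)) := by
  obtain ⟨loop, nodup, visits, mem_of_edge⟩ := hν
  have length_ne : (ν.length : ℝ) ≠ 0 :=
    Nat.cast_ne_zero.2 loop.length_ne_zero
  obtain ⟨h, h_src⟩ := exists_potential_of_loop_eq_zero
    (g := fun e => F e - Fpath F ν / ν.length) loop.1 nodup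
    (by rw [fpath_sub_const, div_mul_cancel₀ _ length_ne, sub_self])
  refine specRadOn_le_of_isSubinvariantOn (amat_nonneg src rng F β) (Real.exp_pos _).le
    (x := C.indicator fun v => Real.exp (-β * h v))
    ⟨fun v hv => by simp [hv, Real.exp_pos], fun v hv => by simp [hv], fun v hv => ?_⟩
  obtain ⟨e, he, rfl⟩ := List.mem_map.1 (visits v hv)
  rw [amat_mulVec, sum_eq_single_of_mem e (by simp) fun f hf hfe => ?_]
  · rw [Set.indicator_of_mem hv, Set.indicator_of_mem (loop.2 e he).2, h_src e he,
      ← Real.exp_add, ← Real.exp_add]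
    exact Real.exp_le_exp.2 (by linarith)
  · have rng_notMem : rng f ∉ C := fun hr => hfe <|
      List.inj_on_of_nodup_map nodup (mem_of_edge f ((mem_filter.1 hf).2 ▸ hv) hr) he
        (mem_filter.1 hf).2
    rw [Set.indicator_of_notMem rng_notMem, mul_zero]

lemma CircularWitness.specRadOn_amat_pow_length (hν : CircularWitness src rng C ν) (F : E → ℝ)
    (β : ℝ) : specRadOn (Amat src rng F β) C ^ ν.length = Real.exp (-β * Fpath F ν) := by
  refine le_antisymm ?_ (hν.1.exp_fpath_le_specRadOn_pow F β)
  calc specRadOn (Amat src rng F β) C ^ ν.length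
      ≤ Real.exp (-β * (Fpath F ν / ν.length)) ^ ν.length :=
        pow_le_pow_left₀ (specRadOn_nonneg (amat_nonneg src rng F β)) (hν.specRadOn_amat_le F β) _
    _ = Real.exp (-β * Fpath F ν) := by
        rw [← Real.exp_nat_mul, mul_left_comm,
          mul_div_cancel₀ _ (Nat.cast_ne_zero.2 hν.1.length_ne_zero)]

lemma CircularWitness.specRadOn_amat_eq_one_iff (hν : CircularWitness src rng C ν) (hβ : β ≠ 0) :
    specRadOn (Amat src rng F β) C = 1 ↔ Fpath F ν = 0 := by
  rw [← pow_eq_one_iff_of_nonneg (specRadOn_nonneg (amat_nonneg src rng F β))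
    hν.1.length_ne_zero, hν.specRadOn_amat_pow_length,
    Real.exp_eq_one_iff, neg_mul, neg_eq_zero, mul_eq_zero_iff_left hβ]

end Circular

/-- For `β > 0` and a circular component `C` with loop `ν`: `C` is `A(β)`-harmonic iff
`F(ν) = 0`, all loops in `C̄ ∖ C` have `F > 0`, and every component `C' ⊆ C̄ ∖ C` satisfies
`ρ(A(β')^{C'}) = 1` for some `β' < β`. -/
theorem isAharmonic_iff_pos_circular {V E : Type*} [Fintype V] [DecidableEq V] [Fintype E]
    (src rng : E → V) (F : E → ℝ)
    (β : ℝ) (hβ : 0 < β)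
    (C : Set V) (hC : GIsComponent src rng C)
    (ν : List E) (hν : CircularWitness src rng C ν) :
    (specRadOn (Amat src rng F β) C = 1 ∧
      ((GClosure src rng C \ C).Nonempty →
        specRadOn (Amat src rng F β) (GClosure src rng C \ C) < 1)) ↔
    (Fpath F ν = 0 ∧
      (∀ μ : List E, LoopIn src rng (GClosure src rng C \ C) μ → 0 < Fpath F μ) ∧
      (∀ C' : Set V, GIsComponent src rng C' → C' ⊆ GClosure src rng C \ C →
        ∃ β' : ℝ, β' < β ∧ specRadOn (Amat src rng F β') C' = 1)) := by
  rw [hν.specRadOn_amat_eq_one_iff hβ.ne', ← specRadOn_amat_lt_one_iff hβ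
    fun v hv => hC.gClass_subset_closure_diff hv]
  refine and_congr_right fun _ => ⟨fun h => ?_, fun h _ => h⟩
  rcases (GClosure src rng C \ C).eq_empty_or_nonempty with empty | nonempty
  · rw [empty, specRadOn_eq_zero (amat_nonneg src rng F β) (by simp)]
    exact one_pos
  · exact h nonempty
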